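/- Let G = (V,E) be a directed graph with n vertices, disjoint vertex sets X = {x_1,...,x_k} and Y = {y_1,...,y_k}, and a distinct variable x_e for each edge e. For a walk W let M_W be the monomial in which x_e appears with multiplicity equal to the number of occurrences of e in W. Let F denote the family of all proper sets of k walks of total length at most l, and Q = \sum_{S ∈ F} \prod_{W ∈ S} M_W, viewed as a polynomial over a field of characteristic 2. Then Q is not the zero polynomial if and only if there exists a proper set of k pairwise vertex-disjoint walks of total length at most l in G. -/

import Mathlib

set_option autoImplicit false

open scoped Classical

noncomputable section

variable {V : Type*}

/-- The list of edge occurrences of a walk given by its list of vertices. -/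
def edgesOf (w : List V) : List (V × V) := w.zip w.tail

/-- `w` is a walk in the directed graph `E` from the source set `X` to the sink
set `Y`: it has at least two vertices, consecutive vertices are joined by edges,
its first vertex is in `X`, its last vertex is in `Y`, and all intermediate
vertices lie outside `X ∪ Y`. -/
def IsWalk (E : V → V → Prop) (X Y : Set V) (w : List V) : Prop :=
  2 ≤ w.length ∧ w.Chain' E ∧
    (∀ a, w.head? = some a → a ∈ X) ∧
    (∀ b, w.getLast? = some b → b ∈ Y) ∧
    ∀ v ∈ w.tail.dropLast, v ∉ X ∧ v ∉ Y

/-- A proper (indexed) set of `k` walks: each member is a walk from `X` to `Y`,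
and the walks have pairwise distinct start vertices and pairwise distinct end
vertices. -/
def Proper (E : V → V → Prop) (X Y : Set V) {k : ℕ} (S : Fin k → List V) : Prop :=
  (∀ i, IsWalk E X Y (S i)) ∧
    Function.Injective (fun i => (S i).head?) ∧
    Function.Injective (fun i => (S i).getLast?)

/-- The walks `S i` are pairwise vertex-disjoint. -/
def Disjointly {k : ℕ} (S : Fin k → List V) : Prop :=
  ∀ i j, i ≠ j → ∀ v, v ∈ S i → v ∉ S j

/-- The total length of an indexed set of walks (each walk on `m` vertices has
length `m - 1`). -/
def totalLen {k : ℕ} (S : Fin k → List V) : ℕ := ∑ i, ((S i).length - 1)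


/-- A proper (unordered) set of `k` walks: a finite set of `k` walks from `X`
to `Y` with pairwise distinct start vertices and pairwise distinct end
vertices. -/
def ProperSet (E : V → V → Prop) (X Y : Set V) (k : ℕ) (S : Finset (List V)) : Prop :=
  S.card = k ∧ (∀ w ∈ S, IsWalk E X Y w) ∧
    (∀ w ∈ S, ∀ w' ∈ S, w ≠ w' → w.head? ≠ w'.head? ∧ w.getLast? ≠ w'.getLast?)

/-- The monomial `M_W` of a walk `W`: each edge variable occurs with
multiplicity equal to the number of occurrences of the edge on the walk. -/
def walkMonomial (F : Type*) [Field F] (w : List V) : MvPolynomial (V × V) F :=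
  (edgesOf w).map (fun e => MvPolynomial.X e) |>.prod

/-!
Order the walks of a proper set by their start vertices. If the loop erasure of some walk meets a
later walk, take the first such walk, the first vertex `v` of its loop erasure that lies on a later
walk, and the first later walk through `v`. Exchanging the tails of these two walks after `v` gives
a different proper set with the same edges. The loop erasure of the first walk up to `v` avoids both
tails, so it survives the exchange and the new set has the same first crossing. The exchange is
therefore an involution without fixed points, and in characteristic two the sets with a crossing
cancel. In a set without crossings the loop erasures of the walks are pairwise disjoint.

Conversely, the loop erasures of pairwise disjoint walks form a proper set whose edges determine
the successor of every vertex. Any proper set with the same monomial has to follow these paths from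
`X` to `Y`, so the monomial has coefficient one.
-/

theorem sum_eq_sum_of_eq_off_pair {ι M : Type*} [AddCommMonoid M] {s : Finset ι} {f g : ι → M}
    {a b : ι} (ha : a ∈ s) (hb : b ∈ s) (hab : a ≠ b) (hpair : f a + f b = g a + g b)
    (hoff : ∀ i ∈ s, i ≠ a → i ≠ b → f i = g i) : ∑ i ∈ s, f i = ∑ i ∈ s, g i := by
  have hsub : {a, b} ⊆ s := Finset.insert_subset ha (Finset.singleton_subset_iff.2 hb)
  rw [← Finset.sum_sdiff hsub, ← Finset.sum_sdiff (f := g) hsub, Finset.sum_pair hab,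
    Finset.sum_pair hab, hpair, Finset.sum_congr rfl fun i hi => ?_]
  grind

section Lists

open List

theorem takeWhile_ne_append_singleton_isPrefix (v : V) (l : List V) :
    l.takeWhile (· ≠ v) ++ [v] <+: l ++ [v] := by
  induction l with
  | nil => simp
  | cons x l ih =>
    by_cases h : x = v
    · simp [h]
    · simpa [h] using ih

theorem exists_append_cons_notMem_right_of_mem {v : V} {l : List V} (h : v ∈ l) :
    ∃ a b, l = a ++ v :: b ∧ v ∉ b := by
  obtain ⟨a, b, hab, hv⟩ := eq_append_cons_of_mem (mem_reverse.2 h)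
  exact ⟨b.reverse, a.reverse, by simpa using congrArg reverse hab, by simpa using hv⟩

theorem exists_first_of_exists_mem {P : V → Prop} {l : List V} (h : ∃ v ∈ l, P v) :
    ∃ a v b, l = a ++ v :: b ∧ P v ∧ ∀ u ∈ a, ¬P u := by
  obtain ⟨v, hv⟩ := Option.isSome_iff_exists.1 (find?_isSome (p := (P ·)).2 (by simpa using h))
  obtain ⟨hPv, a, b, hab, ha⟩ := find?_eq_some_iff_append.1 hv
  exact ⟨a, v, b, hab, by simpa using hPv, by simpa using ha⟩

theorem append_cons_inj_of_notMem_right {a a' b b' : List V} {v : V}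
    (h : a ++ v :: b = a' ++ v :: b') (hb : v ∉ b) (hb' : v ∉ b') : a = a' ∧ b = b' := by
  rcases append_eq_append_iff.1 h with ⟨c, ha, hc⟩ | ⟨c, ha, hc⟩ <;> cases c <;> simp_all

theorem eq_of_append_cons_eq_of_notMem {p p' q q' : List V} {v v' : V}
    (h : p ++ v :: q = p' ++ v' :: q') (hv : v ∉ p') (hv' : v' ∉ p) : v = v' := by
  rcases append_eq_append_iff.1 h with ⟨c, hp, hc⟩ | ⟨c, hp, hc⟩ <;> cases c <;> simp_all

theorem eq_of_isChain_of_rightUnique {R : V → V → Prop} (hR : Relator.RightUnique R) {x : V}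
    {l l' : List V} (hl : (x :: l).IsChain R) (hl' : (x :: l').IsChain R)
    (hlast : ∀ y ∈ (x :: l).getLast?, ∀ z, ¬ R y z)
    (hlast' : ∀ y ∈ (x :: l').getLast?, ∀ z, ¬ R y z) : l = l' := by
  induction l generalizing x l' with
  | nil => cases l' <;> simp_all
  | cons y l ih =>
    cases l' with
    | nil => simp_all
    | cons y' l' =>
      rw [isChain_cons_cons] at hl hl'
      obtain rfl : y = y' := hR hl.1 hl'.1
      rw [getLast?_cons_cons] at hlast hlast'
      rw [ih hl.2 hl'.2 hlast hlast']

end Lists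

section LoopErasure

open List

/-- The chronological loop erasure of a walk: its vertices are read one after another, and whenever
a vertex `v` of the current path recurs, the loop of the path from `v` back to `v` is deleted. -/
def loopErase (w : List V) : List V := w.foldl (fun p v => p.takeWhile (· ≠ v) ++ [v]) []

@[simp]
theorem loopErase_nil : loopErase ([] : List V) = [] := rfl

@[simp]
theorem loopErase_append_singleton (w : List V) (v : V) :
    loopErase (w ++ [v]) = (loopErase w).takeWhile (· ≠ v) ++ [v] := by
  simp [loopErase]

theorem loopErase_append_singleton_isPrefix (w : List V) (v : V) :
    loopErase (w ++ [v]) <+: loopErase w ++ [v] := by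
  rw [loopErase_append_singleton]
  exact takeWhile_ne_append_singleton_isPrefix v _

theorem loopErase_sublist (w : List V) : loopErase w <+ w := by
  induction w using reverseRecOn with
  | nil => simp
  | append_singleton w v ih =>
    exact (loopErase_append_singleton_isPrefix w v).sublist.trans (ih.append_right [v])

theorem nodup_loopErase (w : List V) : (loopErase w).Nodup := by
  induction w using reverseRecOn with
  | nil => simp
  | append_singleton w v ih =>
    rw [loopErase_append_singleton, nodup_append_comm, singleton_append, nodup_cons]
    exact ⟨fun hv => by simpa using mem_takeWhile_imp hv, ih.sublist (takeWhile_sublist _)⟩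

theorem getLast?_loopErase (w : List V) : (loopErase w).getLast? = w.getLast? := by
  induction w using reverseRecOn <;> simp

theorem head?_loopErase (w : List V) : (loopErase w).head? = w.head? := by
  induction w using reverseRecOn with
  | nil => simp
  | append_singleton w v ih =>
    obtain ⟨t, ht⟩ := loopErase_append_singleton_isPrefix w v
    have hhead := congrArg head? ht
    rwa [head?_append_of_ne_nil _ (by simp), head?_append, ih, ← head?_append] at hhead

theorem isChain_loopErase {R : V → V → Prop} {w : List V} (hw : w.IsChain R) :
    (loopErase w).IsChain R := by
  induction w using reverseRecOn with
  | nil => simp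
  | append_singleton w v ih =>
    rw [isChain_append] at hw
    refine IsChain.prefix ?_ (loopErase_append_singleton_isPrefix w v)
    rw [isChain_append, getLast?_loopErase]
    exact ⟨ih hw.1, hw.2⟩

theorem loopErase_append_of_disjoint {l b : List V} (h : (loopErase l).Disjoint b) :
    loopErase (l ++ b) = loopErase l ++ loopErase b := by
  induction b using reverseRecOn with
  | nil => simp
  | append_singleton b v ih =>
    rw [disjoint_append_right, disjoint_singleton] at h
    have hv : ∀ u ∈ loopErase l, decide (u ≠ v) = true := fun u hu => by
      simpa using ne_of_mem_of_not_mem hu h.2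
    rw [← append_assoc, loopErase_append_singleton, loopErase_append_singleton, ih h.1,
      takeWhile_append_of_pos hv, append_assoc]

theorem exists_eq_append_of_prefix_loopErase {p w : List V} (hp : p <+: loopErase w) :
    ∃ l b, w = l ++ b ∧ loopErase l = p ∧ p.Disjoint b := by
  induction w using reverseRecOn with
  | nil => exact ⟨[], [], rfl, (prefix_nil.1 hp).symm, disjoint_nil_right p⟩
  | append_singleton w v ih =>
    rw [loopErase_append_singleton, prefix_concat_iff] at hp
    rcases hp with rfl | hp
    · exact ⟨w ++ [v], [], by simp, by simp, disjoint_nil_right _⟩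
    · obtain ⟨l, b, rfl, hl, hb⟩ := ih (hp.trans (takeWhile_prefix _))
      have hv : v ∉ p := fun hv => by simpa using mem_takeWhile_imp (hp.subset hv)
      exact ⟨l, b ++ [v], by simp, hl, disjoint_append_right.2 ⟨hb, disjoint_singleton.2 hv⟩⟩

end LoopErasure

section Walks

open List

variable {E : V → V → Prop} {X Y : Set V} {a b c d w : List V} {v : V}

theorem isWalk_iff_of_disjoint (hXY : Disjoint X Y) :
    IsWalk E X Y w ↔ w ≠ [] ∧ w.IsChain E ∧ (∀ x ∈ w.head?, x ∈ X) ∧ (∀ y ∈ w.getLast?, y ∈ Y) ∧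
      (∀ v ∈ w.tail, v ∉ X) ∧ ∀ v ∈ w.dropLast, v ∉ Y := by
  have hX : ∀ v ∈ X, v ∉ Y := fun v hv => Set.disjoint_left.1 hXY hv
  change 2 ≤ w.length ∧ w.IsChain E ∧ _ ↔ _
  rcases w with _ | ⟨x, t⟩
  · simp
  rcases t.eq_nil_or_concat' with rfl | ⟨m, y, rfl⟩
  · simpa using hX x
  · have hlast : (x :: (m ++ [y])).getLast? = some y := by simp [getLast?_cons]
    have hdrop : (x :: (m ++ [y])).dropLast = x :: m := dropLast_concat (l₁ := x :: m)
    simp only [hlast, hdrop, length_cons, length_append, head?_cons, tail_cons,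
      dropLast_concat, Option.mem_some_iff, Option.some.injEq, mem_append, mem_cons]
    grind

theorem IsWalk.splice (hXY : Disjoint X Y) (hab : IsWalk E X Y (a ++ v :: b))
    (hcd : IsWalk E X Y (c ++ v :: d)) : IsWalk E X Y (a ++ v :: d) := by
  rw [isWalk_iff_of_disjoint hXY] at *
  obtain ⟨-, habE, habX, -, habtail, habdrop⟩ := hab
  obtain ⟨-, hcdE, -, hcdY, hcdtail, hcddrop⟩ := hcd
  rw [isChain_split] at habE hcdE
  have htail : ∀ l m : List V, (l ++ v :: m).tail = (l ++ [v]).tail ++ m := fun l m => by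
    cases l <;> simp
  rw [htail, forall_mem_append] at habtail hcdtail
  rw [dropLast_append_cons, forall_mem_append] at habdrop hcddrop
  refine ⟨by simp, isChain_split.2 ⟨habE.1, hcdE.2⟩, ?_, ?_, ?_, ?_⟩
  · cases a <;> simpa using habX
  · simpa [getLast?_append] using hcdY
  · rw [htail, forall_mem_append]
    exact ⟨habtail.1, hcdtail.2⟩
  · rw [dropLast_append_cons, forall_mem_append]
    exact ⟨habdrop.1, hcddrop.2⟩

theorem isWalk_loopErase (hXY : Disjoint X Y) (hw : IsWalk E X Y w) :
    IsWalk E X Y (loopErase w) := by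
  rw [isWalk_iff_of_disjoint hXY] at *
  obtain ⟨hne, hE, hX, hY, htail, hdrop⟩ := hw
  have hhead := head?_loopErase w
  have hlast := getLast?_loopErase w
  have hne' : loopErase w ≠ [] := fun h => hne (by simpa [h] using hhead.symm)
  have hdropLast : (loopErase w).dropLast <+ w.dropLast := by
    simpa only [tail_reverse, reverse_sublist] using (loopErase_sublist w).reverse.tail
  exact ⟨hne', isChain_loopErase hE, hhead ▸ hX, hlast ▸ hY,
    fun v hv => htail v ((loopErase_sublist w).tail.subset hv),
    fun v hv => hdrop v (hdropLast.subset hv)⟩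

end Walks

section ProperSets

variable {E : V → V → Prop} {X Y : Set V} {k : ℕ} {S : Finset (List V)}

theorem properSet_iff : ProperSet E X Y k S ↔ S.card = k ∧ (∀ w ∈ S, IsWalk E X Y w) ∧
    Set.InjOn List.head? (S : Set (List V)) ∧ Set.InjOn List.getLast? (S : Set (List V)) := by
  simp only [ProperSet, Set.InjOn, Finset.mem_coe]
  grind

theorem ProperSet.injOn_head? (hS : ProperSet E X Y k S) :
    Set.InjOn List.head? (S : Set (List V)) :=
  (properSet_iff.1 hS).2.2.1

theorem ProperSet.injOn_getLast? (hS : ProperSet E X Y k S) :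
    Set.InjOn List.getLast? (S : Set (List V)) :=
  (properSet_iff.1 hS).2.2.2

theorem properSet_image_loopErase (hXY : Disjoint X Y) (hS : ProperSet E X Y k S) :
    ProperSet E X Y k (S.image loopErase) := by
  obtain ⟨hcard, hwalk, hhead, hlast⟩ := properSet_iff.1 hS
  have hhead' : Set.InjOn (List.head? ∘ loopErase) (S : Set (List V)) :=
    hhead.congr fun w _ => (head?_loopErase w).symm
  have hlast' : Set.InjOn (List.getLast? ∘ loopErase) (S : Set (List V)) :=
    hlast.congr fun w _ => (getLast?_loopErase w).symm
  refine properSet_iff.2 ⟨?_, ?_, ?_, ?_⟩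
  · rw [Finset.card_image_of_injOn hhead'.of_comp, hcard]
  · exact Finset.forall_mem_image.2 fun w hw => isWalk_loopErase hXY (hwalk w hw)
  · simpa only [Finset.coe_image] using hhead'.image_of_comp
  · simpa only [Finset.coe_image] using hlast'.image_of_comp

end ProperSets

section Edges

open List

variable {S : Finset (List V)}

theorem length_edgesOf (w : List V) : (edgesOf w).length = w.length - 1 := by
  simp [edgesOf]

theorem edgesOf_append_cons (a b : List V) (v : V) :
    edgesOf (a ++ v :: b) = edgesOf (a ++ [v]) ++ edgesOf (v :: b) := by
  induction a with
  | nil => rfl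
  | cons x a ih => cases a <;> simp_all [edgesOf]

theorem mem_edgesOf_iff {w : List V} {x y : V} : (x, y) ∈ edgesOf w ↔ [x, y] <:+: w := by
  induction w with
  | nil => simp [edgesOf]
  | cons u w ih =>
    cases w with
    | nil => simp [edgesOf, infix_cons_iff]
    | cons u' w => simpa [edgesOf, infix_cons_iff (a := u)] using or_congr_right ih

/-- The edges traversed by a set of walks, counted with multiplicity: the exponent of the monomial
of the set. -/
def edgeMultiset (S : Finset (List V)) : Multiset (V × V) := ∑ w ∈ S, (edgesOf w : Multiset (V × V))

theorem mem_edgeMultiset {e : V × V} : e ∈ edgeMultiset S ↔ ∃ w ∈ S, e ∈ edgesOf w := by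
  simp [edgeMultiset, Multiset.mem_sum]

theorem card_edgeMultiset (S : Finset (List V)) :
    (edgeMultiset S).card = ∑ w ∈ S, (w.length - 1) := by
  simp [edgeMultiset, length_edgesOf]

theorem prod_walkMonomial (F : Type*) [Field F] (S : Finset (List V)) :
    ∏ w ∈ S, walkMonomial F w = MvPolynomial.monomial (Multiset.toFinsupp (edgeMultiset S)) 1 := by
  have hwalk (w : List V) : walkMonomial F w =
      MvPolynomial.monomial (Multiset.toFinsupp (edgesOf w : Multiset (V × V))) 1 := by
    rw [walkMonomial]
    induction edgesOf w with
    | nil => simp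
    | cons e L ih =>
      rw [map_cons, prod_cons, ih, MvPolynomial.X, MvPolynomial.monomial_mul, one_mul,
        ← Multiset.toFinsupp_singleton, ← map_add, Multiset.singleton_add, Multiset.cons_coe]
  simp only [edgeMultiset, hwalk, map_sum, MvPolynomial.monomial_sum_one]

end Edges

section DisjointPaths

variable {E : V → V → Prop} {X Y : Set V} {S T : Finset (List V)}

theorem isChain_mem_edgeMultiset {w : List V} (hw : w ∈ S) :
    w.IsChain fun x y => (x, y) ∈ edgeMultiset S :=
  (List.isChain_isInfix w).imp fun _ _ h => mem_edgeMultiset.2 ⟨w, hw, mem_edgesOf_iff.2 h⟩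

theorem mem_edgeMultiset_iff_exists_append {x y : V} :
    (x, y) ∈ edgeMultiset S ↔ ∃ a b, a ++ x :: y :: b ∈ S := by
  simp only [mem_edgeMultiset, mem_edgesOf_iff, List.IsInfix, List.append_assoc, List.cons_append,
    List.nil_append]
  grind

theorem rightUnique_mem_edgeMultiset (hnodup : ∀ w ∈ S, w.Nodup)
    (hdisj : (S : Set (List V)).Pairwise List.Disjoint) :
    Relator.RightUnique fun x y => (x, y) ∈ edgeMultiset S := by
  intro x y z hy hz
  obtain ⟨a, b, hab⟩ := mem_edgeMultiset_iff_exists_append.1 hy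
  obtain ⟨c, d, hcd⟩ := mem_edgeMultiset_iff_exists_append.1 hz
  have heq : c ++ x :: z :: d = a ++ x :: y :: b :=
    hdisj.eq hcd hab fun h => h (a := x) (by simp) (by simp)
  have hx : x ∉ c ++ z :: d := (List.nodup_cons.1 (List.nodup_middle.1 (hnodup _ hcd))).1
  rw [List.mem_append, not_or] at hx
  have htail := ((List.append_cons_inj_of_notMem hx.1 hx.2).1 heq).2.2
  exact (List.cons.inj htail).1.symm

theorem notMem_edgeMultiset_of_mem_target (hXY : Disjoint X Y) (hS : ∀ w ∈ S, IsWalk E X Y w)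
    {x y : V} (hx : x ∈ Y) : (x, y) ∉ edgeMultiset S := by
  rw [mem_edgeMultiset_iff_exists_append]
  rintro ⟨a, b, hab⟩
  obtain ⟨-, -, -, -, -, hdrop⟩ := (isWalk_iff_of_disjoint hXY).1 (hS _ hab)
  exact hdrop x (by simp) hx

theorem exists_cons_mem_of_mem_edgeMultiset (hXY : Disjoint X Y) (hS : ∀ w ∈ S, IsWalk E X Y w)
    {x y : V} (hx : x ∈ X) (hxy : (x, y) ∈ edgeMultiset S) : ∃ b, x :: b ∈ S := by
  obtain ⟨a, b, hab⟩ := mem_edgeMultiset_iff_exists_append.1 hxy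
  obtain ⟨-, -, -, -, htail, -⟩ := (isWalk_iff_of_disjoint hXY).1 (hS _ hab)
  cases a with
  | nil => exact ⟨_, hab⟩
  | cons u a => exact (htail x (by simp) hx).elim

theorem eq_of_edgeMultiset_subset (hXY : Disjoint X Y) (hS : ∀ w ∈ S, IsWalk E X Y w)
    (hT : ∀ w ∈ T, IsWalk E X Y w) (hnodup : ∀ w ∈ T, w.Nodup)
    (hdisj : (T : Set (List V)).Pairwise List.Disjoint) (hcard : T.card ≤ S.card)
    (h : edgeMultiset S ⊆ edgeMultiset T) : S = T := by
  refine Finset.eq_of_subset_of_card_le (fun w hw => ?_) hcard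
  obtain ⟨x, y, t, rfl⟩ : ∃ x y t, w = x :: y :: t := by
    have hlen := (hS w hw).1
    match w with
    | x :: y :: t => exact ⟨x, y, t, rfl⟩
  have hx : x ∈ X := (hS _ hw).2.2.1 x rfl
  have hxy := h (mem_edgeMultiset_iff_exists_append.2 ⟨[], t, hw⟩)
  obtain ⟨b, hb⟩ := exists_cons_mem_of_mem_edgeMultiset hXY hT hx hxy
  have hlast {u : List V} (hu : IsWalk E X Y u) :
      ∀ z ∈ u.getLast?, ∀ z', (z, z') ∉ edgeMultiset T := fun z hz _ =>
    notMem_edgeMultiset_of_mem_target hXY hT (hu.2.2.2.1 z hz)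
  have htail : y :: t = b :=
    eq_of_isChain_of_rightUnique (rightUnique_mem_edgeMultiset hnodup hdisj)
      ((isChain_mem_edgeMultiset hw).imp fun _ _ he => h he) (isChain_mem_edgeMultiset hb)
      (hlast (hS _ hw)) (hlast (hT _ hb))
  rwa [htail]

end DisjointPaths

section Crossings

/-- The order on walks by their start vertices that decides which crossing of a set of walks is the
first one. Any well-ordering of the vertices would do. -/
def StartsBefore (w w' : List V) : Prop := WellOrderingRel w.head? w'.head?

theorem startsBefore_congr {u u' w w' : List V} (hu : u.head? = u'.head?)
    (hw : w.head? = w'.head?) : StartsBefore u w ↔ StartsBefore u' w' := by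
  rw [StartsBefore, StartsBefore, hu, hw]

theorem StartsBefore.head?_ne {w w' : List V} (h : StartsBefore w w') : w.head? ≠ w'.head? :=
  ne_of_irrefl h

theorem head?_eq_of_not_startsBefore {w w' : List V} (h : ¬StartsBefore w w')
    (h' : ¬StartsBefore w' w) : w.head? = w'.head? :=
  ((trichotomous_of WellOrderingRel w.head? w'.head?).resolve_left h).resolve_right h'

theorem StartsBefore.trans {u w w' : List V} (h : StartsBefore u w) (h' : StartsBefore w w') :
    StartsBefore u w' :=
  trans_of WellOrderingRel h h'

theorem exists_first_walk {P : List V → Prop} (h : ∃ w, P w) :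
    ∃ w, P w ∧ ∀ u, P u → ¬StartsBefore u w :=
  (InvImage.wf List.head? IsWellFounded.wf).has_min {w | P w} h

/-- Two walks `pre₁ ++ vertex :: post₁` and `pre₂ ++ vertex :: post₂`, each with a marked visit to
the common vertex `vertex`. -/
@[ext]
structure Crossing (V : Type*) where
  vertex : V
  pre₁ : List V
  post₁ : List V
  pre₂ : List V
  post₂ : List V

namespace Crossing

variable {E : V → V → Prop} {X Y : Set V} {k : ℕ} {x y : Crossing V} {S : Finset (List V)}
  {w : List V}

/-- The first of the two walks of a crossing. -/
def walk₁ (x : Crossing V) : List V := x.pre₁ ++ x.vertex :: x.post₁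

/-- The second of the two walks of a crossing. -/
def walk₂ (x : Crossing V) : List V := x.pre₂ ++ x.vertex :: x.post₂

/-- The crossing with the tails of the two walks after the common vertex exchanged. -/
def swap (x : Crossing V) : Crossing V :=
  { x with post₁ := x.post₂, post₂ := x.post₁ }

/-- The loop erasure of the first walk up to its marked visit to the common vertex, without that
vertex. -/
def stem (x : Crossing V) : List V := (loopErase x.pre₁).takeWhile (· ≠ x.vertex)

/-- Replaces each of the two walks of a crossing by the one that starts like it in `x.swap`. -/
def reroute (x : Crossing V) (w : List V) : List V :=
  if w = x.walk₁ then x.swap.walk₁ else if w = x.walk₂ then x.swap.walk₂ else w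

/-- The set of walks in which the two walks of a crossing have exchanged their tails. -/
def exchange (x : Crossing V) (S : Finset (List V)) : Finset (List V) := S.image x.reroute

/-- `x` is the first crossing of `S`: its first walk is the first one whose loop erasure meets a
later walk, its vertex is the first one on that loop erasure lying on a later walk, and its second
walk is the first later walk through that vertex. The marked visit on the first walk is the one at
which the vertex enters the loop erasure for good, and on the second walk it is the last one. -/
structure IsFirst (x : Crossing V) (S : Finset (List V)) : Prop where
  walk₁_mem : x.walk₁ ∈ S
  walk₂_mem : x.walk₂ ∈ S
  startsBefore : StartsBefore x.walk₁ x.walk₂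
  disjoint_of_startsBefore : ∀ w ∈ S, StartsBefore w x.walk₁ → ∀ w' ∈ S, StartsBefore w w' →
    (loopErase w).Disjoint w'
  stem_disjoint : ∀ w ∈ S, StartsBefore x.walk₁ w → x.stem.Disjoint w
  stem_disjoint_post₁ : x.stem.Disjoint x.post₁
  notMem_of_between : ∀ w ∈ S, StartsBefore x.walk₁ w → StartsBefore w x.walk₂ → x.vertex ∉ w
  notMem_post₁ : x.vertex ∉ x.post₁
  notMem_post₂ : x.vertex ∉ x.post₂

theorem vertex_mem_walk₁ (x : Crossing V) : x.vertex ∈ x.walk₁ := by simp [walk₁]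

theorem vertex_mem_walk₂ (x : Crossing V) : x.vertex ∈ x.walk₂ := by simp [walk₂]

theorem head?_walk₁_swap (x : Crossing V) : x.swap.walk₁.head? = x.walk₁.head? := by
  simp [walk₁, swap]

theorem head?_walk₂_swap (x : Crossing V) : x.swap.walk₂.head? = x.walk₂.head? := by
  simp [walk₂, swap]

theorem getLast?_walk₁_swap (x : Crossing V) : x.swap.walk₁.getLast? = x.walk₂.getLast? := by
  simp [walk₁, walk₂, swap, List.getLast?_cons]

theorem getLast?_walk₂_swap (x : Crossing V) : x.swap.walk₂.getLast? = x.walk₁.getLast? := by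
  simp [walk₁, walk₂, swap, List.getLast?_cons]

theorem reroute_walk₁ (x : Crossing V) : x.reroute x.walk₁ = x.swap.walk₁ := if_pos rfl

theorem reroute_walk₂ (h : x.walk₁ ≠ x.walk₂) : x.reroute x.walk₂ = x.swap.walk₂ := by
  rw [reroute, if_neg h.symm, if_pos rfl]

theorem reroute_of_ne (h₁ : w ≠ x.walk₁) (h₂ : w ≠ x.walk₂) : x.reroute w = w := by
  rw [reroute, if_neg h₁, if_neg h₂]

theorem head?_reroute (x : Crossing V) (w : List V) : (x.reroute w).head? = w.head? := by
  unfold reroute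
  split_ifs with h₁ h₂
  · rw [h₁, head?_walk₁_swap]
  · rw [h₂, head?_walk₂_swap]
  · rfl

theorem getLast?_reroute (x : Crossing V) (w : List V) :
    (x.reroute w).getLast? = (Equiv.swap x.walk₁ x.walk₂ w).getLast? := by
  unfold reroute
  split_ifs with h₁ h₂
  · rw [h₁, Equiv.swap_apply_left, getLast?_walk₁_swap]
  · rw [h₂, Equiv.swap_apply_right, getLast?_walk₂_swap]
  · rw [Equiv.swap_apply_of_ne_of_ne h₁ h₂]

theorem disjoint_reroute {p : List V} (h₁ : p.Disjoint x.walk₁) (h₂ : p.Disjoint x.walk₂)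
    (hw : p.Disjoint w) : p.Disjoint (x.reroute w) := by
  simp only [walk₁, walk₂, List.disjoint_append_right, List.disjoint_cons_right] at h₁ h₂
  unfold reroute
  split_ifs
  · exact List.disjoint_append_right.2 ⟨h₁.1, List.disjoint_cons_right.2 h₂.2⟩
  · exact List.disjoint_append_right.2 ⟨h₂.1, List.disjoint_cons_right.2 h₁.2⟩
  · exact hw

theorem isWalk_reroute (hXY : Disjoint X Y) (h₁ : IsWalk E X Y x.walk₁)
    (h₂ : IsWalk E X Y x.walk₂) (hw : IsWalk E X Y w) : IsWalk E X Y (x.reroute w) := by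
  unfold reroute
  split_ifs
  · exact h₁.splice hXY h₂
  · exact h₂.splice hXY h₁
  · exact hw

theorem injOn_reroute (hhead : Set.InjOn List.head? (S : Set (List V))) :
    Set.InjOn x.reroute (S : Set (List V)) :=
  Set.InjOn.of_comp (g := List.head?) (hhead.congr fun w _ => (x.head?_reroute w).symm)

theorem injOn_head?_exchange (hhead : Set.InjOn List.head? (S : Set (List V))) :
    Set.InjOn List.head? (x.exchange S : Set (List V)) := by
  have hcomp : Set.InjOn (List.head? ∘ x.reroute) (S : Set (List V)) :=
    hhead.congr fun w _ => (x.head?_reroute w).symm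
  simpa only [exchange, Finset.coe_image] using hcomp.image_of_comp

namespace IsFirst

theorem walk₁_ne_walk₂ (hx : x.IsFirst S) : x.walk₁ ≠ x.walk₂ := fun h =>
  hx.startsBefore.head?_ne (congrArg List.head? h)

theorem not_pairwise_disjoint (hx : x.IsFirst S) : ¬(S : Set (List V)).Pairwise List.Disjoint :=
  fun hdisj => hdisj hx.walk₁_mem hx.walk₂_mem hx.walk₁_ne_walk₂ x.vertex_mem_walk₁
    x.vertex_mem_walk₂

theorem loopErase_walk₁ (hx : x.IsFirst S) :
    loopErase x.walk₁ = x.stem ++ x.vertex :: loopErase x.post₁ := by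
  have hpre : loopErase (x.pre₁ ++ [x.vertex]) = x.stem ++ [x.vertex] :=
    loopErase_append_singleton _ _
  have hdisj : (loopErase (x.pre₁ ++ [x.vertex])).Disjoint x.post₁ := by
    rw [hpre, List.disjoint_append_left, List.singleton_disjoint]
    exact ⟨hx.stem_disjoint_post₁, hx.notMem_post₁⟩
  rw [walk₁, List.append_cons, loopErase_append_of_disjoint hdisj, hpre, ← List.append_cons]

theorem not_startsBefore_walk₁ (hx : x.IsFirst S) (hy : y.IsFirst S) :
    ¬StartsBefore x.walk₁ y.walk₁ := fun h =>
  hy.disjoint_of_startsBefore x.walk₁ hx.walk₁_mem h x.walk₂ hx.walk₂_mem hx.startsBefore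
    (a := x.vertex) (by simp [hx.loopErase_walk₁]) x.vertex_mem_walk₂

theorem vertex_notMem_stem (hx : x.IsFirst S) (hy : y.IsFirst S) (h : x.walk₁ = y.walk₁) :
    y.vertex ∉ x.stem := fun hv =>
  hx.stem_disjoint _ hy.walk₂_mem (h ▸ hy.startsBefore) hv y.vertex_mem_walk₂

theorem unique (hhead : Set.InjOn List.head? (S : Set (List V))) (hx : x.IsFirst S)
    (hy : y.IsFirst S) : x = y := by
  have hwalk₁ : x.walk₁ = y.walk₁ := hhead hx.walk₁_mem hy.walk₁_mem <|
    head?_eq_of_not_startsBefore (hx.not_startsBefore_walk₁ hy) (hy.not_startsBefore_walk₁ hx)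
  have hvertex : x.vertex = y.vertex := by
    have herase := congrArg loopErase hwalk₁
    rw [hx.loopErase_walk₁, hy.loopErase_walk₁] at herase
    exact eq_of_append_cons_eq_of_notMem herase (hy.vertex_notMem_stem hx hwalk₁.symm)
      (hx.vertex_notMem_stem hy hwalk₁)
  have hwalk₂ : x.walk₂ = y.walk₂ := hhead hx.walk₂_mem hy.walk₂_mem <|
    head?_eq_of_not_startsBefore
      (fun h => hy.notMem_of_between _ hx.walk₂_mem (hwalk₁ ▸ hx.startsBefore) h
        (hvertex ▸ x.vertex_mem_walk₂))
      (fun h => hx.notMem_of_between _ hy.walk₂_mem (hwalk₁ ▸ hy.startsBefore) h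
        (hvertex ▸ y.vertex_mem_walk₂))
  rw [walk₁, walk₁, hvertex] at hwalk₁
  rw [walk₂, walk₂, hvertex] at hwalk₂
  obtain ⟨hpre₁, hpost₁⟩ :=
    append_cons_inj_of_notMem_right hwalk₁ (hvertex ▸ hx.notMem_post₁) hy.notMem_post₁
  obtain ⟨hpre₂, hpost₂⟩ :=
    append_cons_inj_of_notMem_right hwalk₂ (hvertex ▸ hx.notMem_post₂) hy.notMem_post₂
  exact Crossing.ext hvertex hpre₁ hpost₁ hpre₂ hpost₂

theorem reroute_eq_self_of_startsBefore (hx : x.IsFirst S) (h : StartsBefore w x.walk₁) :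
    x.reroute w = w :=
  reroute_of_ne (fun hw => h.head?_ne (congrArg List.head? hw))
    fun hw => (h.trans hx.startsBefore).head?_ne (congrArg List.head? hw)

theorem stem_disjoint_reroute (hx : x.IsFirst S) (hw : w ∈ S) (h : StartsBefore x.walk₁ w) :
    x.stem.Disjoint (x.reroute w) := by
  have hw₁ : w ≠ x.walk₁ := fun hw₁ => h.head?_ne (congrArg List.head? hw₁.symm)
  by_cases hw₂ : w = x.walk₂
  · have hwalk₂ := hx.stem_disjoint _ hx.walk₂_mem hx.startsBefore
    rw [walk₂, List.disjoint_append_right, List.disjoint_cons_right] at hwalk₂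
    rw [hw₂, reroute_walk₂ hx.walk₁_ne_walk₂]
    exact List.disjoint_append_right.2
      ⟨hwalk₂.1, List.disjoint_cons_right.2 ⟨hwalk₂.2.1, hx.stem_disjoint_post₁⟩⟩
  · rw [reroute_of_ne hw₁ hw₂]
    exact hx.stem_disjoint w hw h

theorem swap (hx : x.IsFirst S) : x.swap.IsFirst (x.exchange S) := by
  have hwalk₂ := x.reroute_walk₂ hx.walk₁_ne_walk₂
  have hstem₂ := hx.stem_disjoint _ hx.walk₂_mem hx.startsBefore
  refine ⟨?_, ?_, ?_, ?_, ?_, ?_, ?_, hx.notMem_post₂, hx.notMem_post₁⟩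
  · exact x.reroute_walk₁ ▸ Finset.mem_image_of_mem _ hx.walk₁_mem
  · exact hwalk₂ ▸ Finset.mem_image_of_mem _ hx.walk₂_mem
  · exact (startsBefore_congr x.head?_walk₁_swap x.head?_walk₂_swap).2 hx.startsBefore
  · refine Finset.forall_mem_image.2 fun w hw hlt => Finset.forall_mem_image.2 fun w' hw' hlt' => ?_
    rw [startsBefore_congr (x.head?_reroute w) x.head?_walk₁_swap] at hlt
    rw [startsBefore_congr (x.head?_reroute w) (x.head?_reroute w')] at hlt'
    have hdisj := hx.disjoint_of_startsBefore w hw hlt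
    rw [hx.reroute_eq_self_of_startsBefore hlt]
    exact disjoint_reroute (hdisj _ hx.walk₁_mem hlt)
      (hdisj _ hx.walk₂_mem (hlt.trans hx.startsBefore)) (hdisj w' hw' hlt')
  · refine Finset.forall_mem_image.2 fun w hw hlt => ?_
    rw [startsBefore_congr x.head?_walk₁_swap (x.head?_reroute w)] at hlt
    exact hx.stem_disjoint_reroute hw hlt
  · exact (List.disjoint_cons_right.1 (List.disjoint_append_right.1 hstem₂).2).2
  · refine Finset.forall_mem_image.2 fun w hw hlt hlt' => ?_
    rw [startsBefore_congr x.head?_walk₁_swap (x.head?_reroute w)] at hlt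
    rw [startsBefore_congr (x.head?_reroute w) x.head?_walk₂_swap] at hlt'
    rw [reroute_of_ne (fun h => hlt.head?_ne (congrArg List.head? h.symm))
      fun h => hlt'.head?_ne (congrArg List.head? h)]
    exact hx.notMem_of_between w hw hlt hlt'

theorem exchange_exchange (hhead : Set.InjOn List.head? (S : Set (List V))) (hx : x.IsFirst S) :
    x.swap.exchange (x.exchange S) = S := by
  have hreroute : ∀ w ∈ S, x.swap.reroute (x.reroute w) = w := fun w hw => by
    by_cases h₁ : w = x.walk₁
    · rw [h₁, reroute_walk₁, reroute_walk₁]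
      rfl
    by_cases h₂ : w = x.walk₂
    · rw [h₂, reroute_walk₂ hx.walk₁_ne_walk₂, reroute_walk₂ hx.swap.walk₁_ne_walk₂]
      rfl
    · rw [reroute_of_ne h₁ h₂, reroute_of_ne]
      · exact fun h => h₁ (hhead hw hx.walk₁_mem (by rw [h, head?_walk₁_swap]))
      · exact fun h => h₂ (hhead hw hx.walk₂_mem (by rw [h, head?_walk₂_swap]))
  have hcomp : Set.EqOn (x.swap.reroute ∘ x.reroute) id S := hreroute
  rw [exchange, exchange, Finset.image_image, Finset.image_congr hcomp, Finset.image_id]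

theorem exchange_ne (hhead : Set.InjOn List.head? (S : Set (List V)))
    (hlast : Set.InjOn List.getLast? (S : Set (List V))) (hx : x.IsFirst S) :
    x.exchange S ≠ S := by
  intro h
  have hmem : x.swap.walk₁ ∈ S := h ▸ hx.swap.walk₁_mem
  have hwalk₁ : x.swap.walk₁ = x.walk₁ := hhead hmem hx.walk₁_mem x.head?_walk₁_swap
  have hwalk₂ : x.swap.walk₁ = x.walk₂ := hlast hmem hx.walk₂_mem x.getLast?_walk₁_swap
  exact hx.walk₁_ne_walk₂ (hwalk₁.symm.trans hwalk₂)

theorem properSet_exchange (hXY : Disjoint X Y) (hS : ProperSet E X Y k S) (hx : x.IsFirst S) :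
    ProperSet E X Y k (x.exchange S) := by
  obtain ⟨hcard, hwalk, hhead, hlast⟩ := properSet_iff.1 hS
  have hswap : Set.MapsTo (Equiv.swap x.walk₁ x.walk₂) S S := fun w hw => by
    rw [Equiv.swap_apply_def]
    split_ifs
    exacts [hx.walk₂_mem, hx.walk₁_mem, hw]
  have hlast' : Set.InjOn (List.getLast? ∘ x.reroute) (S : Set (List V)) :=
    (hlast.comp (Equiv.injective _).injOn hswap).congr fun w _ => (x.getLast?_reroute w).symm
  refine properSet_iff.2 ⟨?_, ?_, injOn_head?_exchange hhead, ?_⟩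
  · rw [exchange, Finset.card_image_of_injOn (injOn_reroute hhead), hcard]
  · exact Finset.forall_mem_image.2 fun w hw => isWalk_reroute hXY (hwalk _ hx.walk₁_mem)
      (hwalk _ hx.walk₂_mem) (hwalk w hw)
  · simpa only [exchange, Finset.coe_image] using hlast'.image_of_comp

theorem edgeMultiset_exchange (hhead : Set.InjOn List.head? (S : Set (List V)))
    (hx : x.IsFirst S) : edgeMultiset (x.exchange S) = edgeMultiset S := by
  have hsplit (a b : List V) : (edgesOf (a ++ x.vertex :: b) : Multiset (V × V)) =
      edgesOf (a ++ [x.vertex]) + edgesOf (x.vertex :: b) := by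
    rw [edgesOf_append_cons, Multiset.coe_add]
  have hpair : (edgesOf (x.reroute x.walk₁) : Multiset (V × V)) + edgesOf (x.reroute x.walk₂) =
      edgesOf x.walk₁ + edgesOf x.walk₂ := by
    rw [reroute_walk₁, reroute_walk₂ hx.walk₁_ne_walk₂]
    simp only [walk₁, walk₂, Crossing.swap]
    rw [hsplit x.pre₁ x.post₁, hsplit x.pre₁ x.post₂, hsplit x.pre₂ x.post₁,
      hsplit x.pre₂ x.post₂]
    abel
  rw [edgeMultiset, exchange, Finset.sum_image (injOn_reroute hhead)]
  exact sum_eq_sum_of_eq_off_pair hx.walk₁_mem hx.walk₂_mem hx.walk₁_ne_walk₂ hpair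
    fun w _ h₁ h₂ => by rw [reroute_of_ne h₁ h₂]

end IsFirst

theorem exists_isFirst (h : ∃ w ∈ S, ∃ w' ∈ S, StartsBefore w w' ∧ ¬(loopErase w).Disjoint w') :
    ∃ x : Crossing V, x.IsFirst S := by
  obtain ⟨w₁, ⟨hw₁, u, hu, hlt, hmeet⟩, hmin₁⟩ := exists_first_walk h
  obtain ⟨z, hz, hzu⟩ : ∃ z ∈ loopErase w₁, z ∈ u := by simpa [List.Disjoint] using hmeet
  obtain ⟨p, v, q, hpq, hv, hp⟩ := exists_first_of_exists_mem
    (P := fun z => ∃ w ∈ S, StartsBefore w₁ w ∧ z ∈ w) ⟨z, hz, u, hu, hlt, hzu⟩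
  obtain ⟨w₂, ⟨hw₂, hlt₂, hvw₂⟩, hmin₂⟩ := exists_first_walk hv
  obtain ⟨c, b, rfl, hc, hb⟩ := exists_eq_append_of_prefix_loopErase
    (p := p ++ [v]) (w := w₁) (by simp [hpq])
  obtain ⟨a, rfl⟩ : ∃ a, c = a ++ [v] := by
    rw [← List.getLast?_eq_some_iff, ← getLast?_loopErase, hc, List.getLast?_concat]
  obtain ⟨c, d, rfl, hd⟩ := exists_append_cons_notMem_right_of_mem hvw₂
  obtain rfl : (loopErase a).takeWhile (· ≠ v) = p := by
    simpa only [loopErase_append_singleton, List.append_cancel_right_eq] using hc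
  rw [List.disjoint_append_left, List.singleton_disjoint] at hb
  rw [← List.append_cons] at *
  exact ⟨⟨v, a, b, c, d⟩, hw₁, hw₂, hlt₂,
    fun w hw hlt w' hw' hlt' => by_contra fun hmeet => hmin₁ w ⟨hw, w', hw', hlt', hmeet⟩ hlt,
    fun w hw hlt z hz hzw => hp z hz ⟨w, hw, hlt, hzw⟩, hb.1,
    fun w hw hlt hlt' hv => hmin₂ w ⟨hw, hlt, hv⟩ hlt', hb.2, hd⟩

end Crossing

end Crossings

section WalkPolynomial

variable {E : V → V → Prop} {X Y : Set V} {k l : ℕ} {S T : Finset (List V)}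

theorem pairwise_disjoint_image_loopErase (hhead : Set.InjOn List.head? (S : Set (List V)))
    (h : ∀ x : Crossing V, ¬x.IsFirst S) :
    (S.image loopErase : Set (List V)).Pairwise List.Disjoint := by
  have hdisj : ∀ w ∈ S, ∀ w' ∈ S, StartsBefore w w' → (loopErase w).Disjoint (loopErase w') := by
    contrapose! h
    obtain ⟨w, hw, w', hw', hlt, hmeet⟩ := h
    exact Crossing.exists_isFirst ⟨w, hw, w', hw', hlt, fun hdisj =>
      hmeet (List.disjoint_of_subset_right (loopErase_sublist w').subset hdisj)⟩
  have hpairwise : (S : Set (List V)).Pairwise (Function.onFun List.Disjoint loopErase) := by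
    intro w hw w' hw' hne
    by_cases hlt : StartsBefore w w'
    · exact hdisj w hw w' hw' hlt
    by_cases hlt' : StartsBefore w' w
    · exact (hdisj w' hw' w hw hlt').symm
    · exact (hne (hhead hw hw' (head?_eq_of_not_startsBefore hlt hlt'))).elim
  rw [Finset.coe_image]
  exact hpairwise.image

theorem sum_length_image_loopErase_le (S : Finset (List V)) :
    ∑ w ∈ S.image loopErase, (w.length - 1) ≤ ∑ w ∈ S, (w.length - 1) :=
  (Finset.sum_image_le_of_nonneg fun _ _ => Nat.zero_le _).trans <|
    Finset.sum_le_sum fun w _ => Nat.sub_le_sub_right (loopErase_sublist w).length_le 1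

/-- Membership in the family of the walk polynomial: proper sets of `k` walks of total length at
most `l`. -/
def IsBoundedProperSet (E : V → V → Prop) (X Y : Set V) (k l : ℕ) (S : Finset (List V)) : Prop :=
  ProperSet E X Y k S ∧ ∑ w ∈ S, (w.length - 1) ≤ l

theorem isBoundedProperSet_image_loopErase (hXY : Disjoint X Y)
    (hS : IsBoundedProperSet E X Y k l S) :
    IsBoundedProperSet E X Y k l (S.image loopErase) :=
  ⟨properSet_image_loopErase hXY hS.1, (sum_length_image_loopErase_le S).trans hS.2⟩

theorem isBoundedProperSet_exchange (hXY : Disjoint X Y) {x : Crossing V} (hx : x.IsFirst S)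
    (hS : IsBoundedProperSet E X Y k l S) : IsBoundedProperSet E X Y k l (x.exchange S) := by
  refine ⟨hx.properSet_exchange hXY hS.1, ?_⟩
  rw [← card_edgeMultiset, hx.edgeMultiset_exchange hS.1.injOn_head?, card_edgeMultiset]
  exact hS.2

theorem sum_prod_walkMonomial_eq_zero (F : Type*) [Field F] [CharP F 2]
    {𝓕 : Finset (Finset (List V))}
    (hhead : ∀ S ∈ 𝓕, Set.InjOn List.head? (S : Set (List V)))
    (hlast : ∀ S ∈ 𝓕, Set.InjOn List.getLast? (S : Set (List V)))
    (hfirst : ∀ S ∈ 𝓕, ∃ x : Crossing V, x.IsFirst S)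
    (hexchange : ∀ S ∈ 𝓕, ∀ x : Crossing V, x.IsFirst S → x.exchange S ∈ 𝓕) :
    ∑ S ∈ 𝓕, ∏ w ∈ S, walkMonomial F w = 0 := by
  choose x hx using hfirst
  have hmem : ∀ S hS, (x S hS).exchange S ∈ 𝓕 := fun S hS => hexchange S hS _ (hx S hS)
  refine Finset.sum_involution (fun S hS => (x S hS).exchange S) (fun S hS => ?_)
    (fun S hS _ => (hx S hS).exchange_ne (hhead S hS) (hlast S hS)) hmem fun S hS => ?_
  · rw [prod_walkMonomial, prod_walkMonomial, (hx S hS).edgeMultiset_exchange (hhead S hS),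
      CharTwo.add_self_eq_zero]
  · rw [(hx _ (hmem S hS)).unique (hhead _ (hmem S hS)) (hx S hS).swap]
    exact (hx S hS).exchange_exchange (hhead S hS)

theorem sum_prod_walkMonomial_ne_zero (F : Type*) [Field F] (hXY : Disjoint X Y)
    {𝓕 : Finset (Finset (List V))} (h𝓕 : ∀ S ∈ 𝓕, ProperSet E X Y k S) (hT : T ∈ 𝓕)
    (hnodup : ∀ w ∈ T, w.Nodup) (hdisj : (T : Set (List V)).Pairwise List.Disjoint) :
    ∑ S ∈ 𝓕, ∏ w ∈ S, walkMonomial F w ≠ 0 := by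
  have hunique : ∀ S ∈ 𝓕, S ≠ T → edgeMultiset S ≠ edgeMultiset T := fun S hS hne h =>
    hne <| eq_of_edgeMultiset_subset hXY (h𝓕 S hS).2.1 (h𝓕 T hT).2.1 hnodup hdisj
      ((h𝓕 T hT).1.trans (h𝓕 S hS).1.symm).le (Multiset.subset_of_le h.le)
  have hcoeff : MvPolynomial.coeff (Multiset.toFinsupp (edgeMultiset T))
      (∑ S ∈ 𝓕, ∏ w ∈ S, walkMonomial F w) = 1 := by
    simp only [prod_walkMonomial, MvPolynomial.coeff_sum, MvPolynomial.coeff_monomial]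
    rw [Finset.sum_eq_single_of_mem T hT, if_pos rfl]
    exact fun S hS hne => if_neg (Multiset.toFinsupp.injective.ne (hunique S hS hne))
  intro h
  rw [h, MvPolynomial.coeff_zero] at hcoeff
  exact zero_ne_one hcoeff

end WalkPolynomial

theorem walk_polynomial_ne_zero_iff_general (E : V → V → Prop) (X Y : Set V)
    (hXY : Disjoint X Y) (k l : ℕ) (F : Type*) [Field F] [CharP F 2]
    (fam : Set (Finset (List V)))
    (hfam : fam = {S | ProperSet E X Y k S ∧ (∑ w ∈ S, (w.length - 1)) ≤ l})
    (hfin : fam.Finite) :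
    (∑ S ∈ hfin.toFinset, ∏ w ∈ S, walkMonomial F w) ≠ 0 ↔
      ∃ S : Finset (List V), ProperSet E X Y k S ∧
        (∑ w ∈ S, (w.length - 1)) ≤ l ∧
        ∀ w ∈ S, ∀ w' ∈ S, w ≠ w' → ∀ v, v ∈ w → v ∉ w' := by
  have hmem : ∀ S, S ∈ hfin.toFinset ↔ IsBoundedProperSet E X Y k l S := by
    simp [hfam, IsBoundedProperSet]
  constructor
  · intro hne
    obtain ⟨S, hS, hno⟩ : ∃ S ∈ hfin.toFinset, ∀ x : Crossing V, ¬x.IsFirst S := by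
      by_contra! hfirst
      exact hne <| sum_prod_walkMonomial_eq_zero F (fun S hS => ((hmem S).1 hS).1.injOn_head?)
        (fun S hS => ((hmem S).1 hS).1.injOn_getLast?) hfirst
        fun S hS x hx => (hmem _).2 (isBoundedProperSet_exchange hXY hx ((hmem S).1 hS))
    rw [hmem] at hS
    have hdisj := pairwise_disjoint_image_loopErase hS.1.injOn_head? hno
    obtain ⟨hproper, hlen⟩ := isBoundedProperSet_image_loopErase hXY hS
    exact ⟨S.image loopErase, hproper, hlen, fun w hw w' hw' hne v => hdisj hw hw' hne (a := v)⟩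
  · rintro ⟨S, hproper, hlen, hdisj⟩
    have hno : ∀ x : Crossing V, ¬x.IsFirst S := fun x hx =>
      hx.not_pairwise_disjoint fun w hw w' hw' hne v => hdisj w hw w' hw' hne v
    exact sum_prod_walkMonomial_ne_zero F hXY (fun S hS => ((hmem S).1 hS).1)
      ((hmem _).2 (isBoundedProperSet_image_loopErase hXY ⟨hproper, hlen⟩))
      (Finset.forall_mem_image.2 fun w _ => nodup_loopErase w)
      (pairwise_disjoint_image_loopErase hproper.injOn_head? hno)

/-- Over a field of characteristic two, the polynomial
`Q = ∑_{S} ∏_{W ∈ S} M_W`, the sum ranging over all proper sets `S` of `k`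
walks of total length at most `l`, is nonzero iff there is a proper set of `k`
pairwise vertex-disjoint walks of total length at most `l`. -/
theorem walk_polynomial_ne_zero_iff (E : V → V → Prop) (X Y : Set V)
    (hXY : Disjoint X Y) (n : ℕ) [Fintype V] (hn : Fintype.card V = n)
    (k l : ℕ) (hl : l ≤ k * (n - 1))
    (F : Type*) [Field F] [CharP F 2]
    (fam : Set (Finset (List V)))
    (hfam : fam = {S | ProperSet E X Y k S ∧ (∑ w ∈ S, (w.length - 1)) ≤ l})
    (hfin : fam.Finite) :
    (∑ S ∈ hfin.toFinset, ∏ w ∈ S, walkMonomial F w) ≠ 0 ↔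
      ∃ S : Finset (List V), ProperSet E X Y k S ∧
        (∑ w ∈ S, (w.length - 1)) ≤ l ∧
        ∀ w ∈ S, ∀ w' ∈ S, w ≠ w' → ∀ v, v ∈ w → v ∉ w' := by
  exact walk_polynomial_ne_zero_iff_general E X Y hXY k l F fam hfam hfin

end
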